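/- Let $n\geq 1$, $s\in(0,1)$, $\alpha\in(0,1)$, $e,\omega\in\partial B_1\subset\mathbb{R}^n$ and $\varepsilon_o>0$ with $e+\varepsilon\omega\in B_1$ for all $\varepsilon\in(0,\varepsilon_o]$, and let $f\in C^\alpha(\mathbb{R}^n)$ with $f=0$ outside $B_1$. For $x,z\in B_1$, $x\neq z$, set $r_0(x,z)=\frac{(1-|x|^2)(1-|z|^2)}{|z-x|^2}$, $r_1(x,z)=\min\{r_0(x,z),1/2\}$, $G(x,z)=|z-x|^{2s-n}\int_0^{r_0(x,z)}t^{s-1}(t+1)^{-n/2}dt$ and $\mathcal{G}_0(x,z)=\frac{|z-x|^{2s-n}}{s}\,\big(r_1(x,z)\big)^s$, and let $\mathcal{D}_2(\varepsilon)=\{z\in B_1:\ r_0(e+\varepsilon\omega,z)\leq 1/2\}$. Then $\lim_{\varepsilon\searrow0}\varepsilon^{-s}\left(\int_{B_1}f(z)\,G(e+\varepsilon\omega,z)\,dz-\int_{\mathcal{D}_2(\varepsilon)}f(z)\,\mathcal{G}_0(e+\varepsilon\omega,z)\,dz\right)=0$; i.e. $\int_{B_1}f\,G(e+\varepsilon\omega,\cdot)=\int_{\mathcal{D}_2(\varepsilon)}f\,\mathcal{G}_0(e+\varepsilon\omega,\cdot)+o(\varepsilon^s)$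 as $\varepsilon\searrow0$. -/

import Mathlib

open MeasureTheory Filter Metric Set intervalIntegral
open scoped RealInnerProductSpace

/-- `r₀(x,z) = (1-|x|²)(1-|z|²)/|z-x|²`. -/
noncomputable def rZero {n : ℕ} (x z : EuclideanSpace ℝ (Fin n)) : ℝ :=
  (1 - ‖x‖ ^ 2) * (1 - ‖z‖ ^ 2) / ‖z - x‖ ^ 2

/-- `r₁ = min(r₀, 1/2)`. -/
noncomputable def rOne {n : ℕ} (x z : EuclideanSpace ℝ (Fin n)) : ℝ :=
  min (rZero x z) (1 / 2)

/-- The fractional Green-type function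
`G(x,z) = |z-x|^{2s-n} ∫₀^{r₀(x,z)} t^{s-1} (t+1)^{-n/2} dt`. -/
noncomputable def fracGreen (n : ℕ) (s : ℝ) (x z : EuclideanSpace ℝ (Fin n)) : ℝ :=
  ‖z - x‖ ^ (2 * s - n) * ∫ t in (0 : ℝ)..(rZero x z), t ^ (s - 1) / (t + 1) ^ ((n : ℝ) / 2)

/-- The principal part `𝒢₀(x,z) = |z-x|^{2s-n} (r₁(x,z))^s / s`. -/
noncomputable def fracGreenPrincipal (n : ℕ) (s : ℝ) (x z : EuclideanSpace ℝ (Fin n)) : ℝ :=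
  ‖z - x‖ ^ (2 * s - n) / s * rOne x z ^ s

/-- The radial profile `F(r) = ∫₀^r t^{s-1} (t+1)^{-n/2} dt` of the fractional Green function. -/
noncomputable def greenProfile (n : ℕ) (s r : ℝ) : ℝ :=
  ∫ t in (0 : ℝ)..r, t ^ (s - 1) / (t + 1) ^ ((n : ℝ) / 2)

lemma greenProfile_integrand_nonneg (n : ℕ) (s : ℝ) {t : ℝ} (ht : 0 ≤ t) :
    0 ≤ t ^ (s - 1) / (t + 1) ^ ((n : ℝ) / 2) := by
  positivity

lemma intervalIntegrable_greenProfile_integrand (n : ℕ) {s r : ℝ} (hs : 0 < s) (hr : 0 ≤ r) :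
    IntervalIntegrable (fun t : ℝ => t ^ (s - 1) / (t + 1) ^ ((n : ℝ) / 2)) volume 0 r := by
  simp only [div_eq_mul_inv]
  refine (intervalIntegrable_rpow' (by linarith)).mul_continuousOn ?_
  intro t ht
  rw [uIcc_of_le hr] at ht
  have h1 : 0 < t + 1 := by linarith [ht.1]
  refine ContinuousAt.continuousWithinAt (ContinuousAt.inv₀ ?_ (by positivity))
  exact ContinuousAt.rpow_const (by fun_prop) (Or.inl h1.ne')

lemma greenProfile_nonneg (n : ℕ) (s : ℝ) {r : ℝ} (hr : 0 ≤ r) : 0 ≤ greenProfile n s r :=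
  intervalIntegral.integral_nonneg hr fun _ ht => greenProfile_integrand_nonneg n s ht.1

lemma monotone_greenProfile_max (n : ℕ) {s : ℝ} (hs : 0 < s) :
    Monotone fun r : ℝ => greenProfile n s (max 0 r) := by
  intro a b hab
  refine intervalIntegral.integral_mono_interval le_rfl (le_max_left _ _)
    (max_le_max_left 0 hab) ?_
    (intervalIntegrable_greenProfile_integrand n hs (le_max_left _ _))
  filter_upwards [ae_restrict_mem measurableSet_Ioc] with t ht
  exact greenProfile_integrand_nonneg n s ht.1.le

lemma integral_rpow_sub_one {p : ℝ} (hp : 0 < p) (r : ℝ) :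
    ∫ t in (0 : ℝ)..r, t ^ (p - 1) = r ^ p / p := by
  rw [integral_rpow (Or.inl (by linarith))]
  simp [Real.zero_rpow hp.ne']

/-- Growth bound for the profile, using part of the decay of `(t+1)^{-n/2}`. -/
lemma greenProfile_le_rpow {n : ℕ} {s r θ : ℝ} (hθ : 0 ≤ θ) (hθs : θ < s)
    (hθn : θ ≤ (n : ℝ) / 2) (hr : 0 ≤ r) :
    greenProfile n s r ≤ r ^ (s - θ) / (s - θ) := by
  rw [← integral_rpow_sub_one (sub_pos.2 hθs)]
  refine intervalIntegral.integral_mono_on_of_le_Ioo hr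
    (intervalIntegrable_greenProfile_integrand n (hθ.trans_lt hθs) hr)
    (intervalIntegrable_rpow' (by linarith)) fun t ht => ?_
  have ht0 : 0 < t := ht.1
  have h : t ^ θ ≤ (t + 1) ^ ((n : ℝ) / 2) :=
    (Real.rpow_le_rpow ht0.le (by linarith) hθ).trans
      (Real.rpow_le_rpow_of_exponent_le (by linarith) hθn)
  rw [show s - θ - 1 = (s - 1) - θ by ring, Real.rpow_sub ht0 (s - 1) θ]
  gcongr

lemma one_sub_mul_le_inv_rpow {a t : ℝ} (ha : 0 ≤ a) (ht : 0 ≤ t) :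
    1 - a * t ≤ ((t + 1) ^ a)⁻¹ := by
  have h : (t + 1) ^ a ≤ Real.exp (a * t) := by
    rw [mul_comm, Real.exp_mul]
    exact Real.rpow_le_rpow (by linarith) (Real.add_one_le_exp t) ha
  calc 1 - a * t ≤ Real.exp (-(a * t)) := Real.one_sub_le_exp_neg _
    _ = (Real.exp (a * t))⁻¹ := Real.exp_neg _
    _ ≤ _ := inv_anti₀ (by positivity) h

/-- The profile agrees with `r^s/s` up to order `r^{s+1}`. -/
lemma abs_greenProfile_sub_le (n : ℕ) {s r : ℝ} (hs : 0 < s) (hr : 0 ≤ r) :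
    |greenProfile n s r - r ^ s / s| ≤ (n : ℝ) / 2 * r ^ (s + 1) := by
  have hle : greenProfile n s r ≤ r ^ s / s := by
    simpa using greenProfile_le_rpow (n := n) le_rfl hs (by positivity) hr
  have hi1 : IntervalIntegrable (fun t : ℝ => t ^ (s - 1)) volume 0 r :=
    intervalIntegrable_rpow' (by linarith)
  have hi2 : IntervalIntegrable (fun t : ℝ => (n : ℝ) / 2 * t ^ (s + 1 - 1)) volume 0 r :=
    (intervalIntegrable_rpow' (by linarith)).const_mul _
  have hge : r ^ s / s - (n : ℝ) / 2 * (r ^ (s + 1) / (s + 1)) ≤ greenProfile n s r := by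
    rw [← integral_rpow_sub_one hs, ← integral_rpow_sub_one (by linarith : 0 < s + 1),
      ← intervalIntegral.integral_const_mul, ← intervalIntegral.integral_sub hi1 hi2]
    refine intervalIntegral.integral_mono_on_of_le_Ioo hr (hi1.sub hi2)
      (intervalIntegrable_greenProfile_integrand n hs hr) fun t ht => ?_
    have ht0 : 0 < t := ht.1
    have h := mul_le_mul_of_nonneg_left
      (one_sub_mul_le_inv_rpow (a := (n : ℝ) / 2) (by positivity) ht0.le)
      (Real.rpow_nonneg ht0.le (s - 1))
    have h2 : t ^ (s + 1 - 1) = t ^ (s - 1) * t := by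
      rw [← Real.rpow_add_one ht0.ne']; ring_nf
    rw [h2, div_eq_mul_inv (t ^ (s - 1))]
    linarith
  have h3 : r ^ (s + 1) / (s + 1) ≤ r ^ (s + 1) :=
    div_le_self (by positivity) (by linarith)
  have h4 := mul_le_mul_of_nonneg_left h3 (by positivity : (0 : ℝ) ≤ (n : ℝ) / 2)
  rw [abs_le]
  have : 0 ≤ (n : ℝ) / 2 * r ^ (s + 1) := by positivity
  constructor <;> linarith

lemma fracGreen_eq (n : ℕ) (s : ℝ) (x z : EuclideanSpace ℝ (Fin n)) :
    fracGreen n s x z = ‖z - x‖ ^ (2 * s - n) * greenProfile n s (rZero x z) := rfl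

lemma one_sub_norm_sq_le {E : Type*} [NormedAddCommGroup E] {x z : E}
    (hx : ‖x‖ < 1) (hz : ‖z‖ < 1) : 1 - ‖z‖ ^ 2 ≤ 1 - ‖x‖ ^ 2 + 2 * ‖z - x‖ := by
  have h1 : ‖x‖ - ‖z‖ ≤ ‖z - x‖ := by
    rw [norm_sub_rev]; exact norm_sub_norm_le x z
  nlinarith [norm_nonneg x, norm_nonneg z, norm_nonneg (z - x)]

lemma rpow_mul_div_sq_rpow {d A : ℝ} (hd : 0 < d) (hA : 0 ≤ A) (a p : ℝ) :
    d ^ a * (A / d ^ 2) ^ p = A ^ p * d ^ (a - 2 * p) := by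
  rw [Real.div_rpow hA (by positivity), Real.rpow_sub hd, Real.rpow_mul hd.le,
    Real.rpow_two]
  ring

lemma rZero_nonneg {n : ℕ} {x z : EuclideanSpace ℝ (Fin n)} (hx : ‖x‖ < 1) (hz : ‖z‖ < 1) :
    0 ≤ rZero x z := by
  have h1 : 0 ≤ 1 - ‖x‖ ^ 2 := by nlinarith [norm_nonneg x]
  have h2 : 0 ≤ 1 - ‖z‖ ^ 2 := by nlinarith [norm_nonneg z]
  unfold rZero
  positivity

lemma rZero_self {n : ℕ} (x : EuclideanSpace ℝ (Fin n)) : rZero x x = 0 := by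
  simp [rZero]

lemma fracGreen_nonneg (n : ℕ) (s : ℝ) {x z : EuclideanSpace ℝ (Fin n)}
    (hx : ‖x‖ < 1) (hz : ‖z‖ < 1) : 0 ≤ fracGreen n s x z := by
  rw [fracGreen_eq]
  exact mul_nonneg (by positivity) (greenProfile_nonneg n s (rZero_nonneg hx hz))

lemma fracGreen_self (n : ℕ) (s : ℝ) (x : EuclideanSpace ℝ (Fin n)) : fracGreen n s x x = 0 := by
  simp [fracGreen, rZero_self]

lemma fracGreen_le {n : ℕ} (hn : 1 ≤ n) {s : ℝ} (hs : s ∈ Set.Ioo (0 : ℝ) 1)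
    {x z : EuclideanSpace ℝ (Fin n)} (hx : ‖x‖ < 1) (hz : ‖z‖ < 1) :
    fracGreen n s x z ≤ 4 / (3 * s) * ((1 - ‖x‖ ^ 2) * (1 - ‖z‖ ^ 2)) ^ (3 * s / 4) *
      ‖z - x‖ ^ (s / 2 - n) := by
  obtain ⟨hs0, hs1⟩ := hs
  have hn' : (1 : ℝ) ≤ n := by exact_mod_cast hn
  have h1 : 0 ≤ 1 - ‖x‖ ^ 2 := by nlinarith [norm_nonneg x]
  have h2 : 0 ≤ 1 - ‖z‖ ^ 2 := by nlinarith [norm_nonneg z]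
  rcases eq_or_ne z x with rfl | hne
  · rw [fracGreen_self]
    positivity
  have hd : 0 < ‖z - x‖ := norm_pos_iff.2 (sub_ne_zero.2 hne)
  have hF := greenProfile_le_rpow (n := n) (θ := s / 4) (by linarith) (by linarith : s / 4 < s)
    (by linarith) (rZero_nonneg hx hz)
  have hrw := rpow_mul_div_sq_rpow hd (mul_nonneg h1 h2) (2 * s - n) (3 * s / 4)
  rw [show s - s / 4 = 3 * s / 4 by ring] at hF
  rw [show 2 * s - n - 2 * (3 * s / 4) = s / 2 - n by ring] at hrw
  calc fracGreen n s x z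
      ≤ ‖z - x‖ ^ (2 * s - n) * (rZero x z ^ (3 * s / 4) / (3 * s / 4)) := by
        rw [fracGreen_eq]
        gcongr
    _ = 4 / (3 * s) * (‖z - x‖ ^ (2 * s - n) * rZero x z ^ (3 * s / 4)) := by
        field_simp
    _ = _ := by rw [rZero, hrw]; ring

/-- Pointwise control of the error made by keeping only the principal part where `r₀ ≤ 1/2`. -/
lemma abs_fracGreen_sub_indicator_le {n : ℕ} (hn : 1 ≤ n) {s : ℝ} (hs : s ∈ Set.Ioo (0 : ℝ) 1)
    {x z : EuclideanSpace ℝ (Fin n)} (hx : ‖x‖ < 1) (hz : ‖z‖ < 1) :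
    |fracGreen n s x z -
        {z | rZero x z ≤ 1 / 2}.indicator (fun z => fracGreenPrincipal n s x z) z| ≤
      (4 / (3 * s) * 11 ^ (3 * s / 4) + n / 2 * 3 ^ (3 * s / 2)) *
        (1 - ‖x‖ ^ 2) ^ (3 * s / 2) * ‖z - x‖ ^ (s / 2 - n) := by
  have hs0 := hs.1
  have hs1 := hs.2
  have h1 : 0 ≤ 1 - ‖x‖ ^ 2 := by nlinarith [norm_nonneg x]
  have h2 : 0 ≤ 1 - ‖z‖ ^ 2 := by nlinarith [norm_nonneg z]
  rcases eq_or_ne z x with rfl | hne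
  · have : fracGreenPrincipal n s z z = 0 := by
      simp [fracGreenPrincipal, rOne, rZero_self, Real.zero_rpow hs0.ne']
    simp only [indicator_apply, this, ite_self, fracGreen_self, sub_zero, abs_zero]
    positivity
  have hd : 0 < ‖z - x‖ := norm_pos_iff.2 (sub_ne_zero.2 hne)
  have hr := rZero_nonneg hx hz
  have hq1 := one_sub_norm_sq_le hx hz
  have hq2 := one_sub_norm_sq_le hz hx
  rw [norm_sub_rev x z] at hq2
  by_cases hle : rZero x z ≤ 1 / 2
  · rw [indicator_of_mem (by exact hle), fracGreen_eq, fracGreenPrincipal, rOne, min_eq_left hle]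
    have hq : 1 - ‖z‖ ^ 2 ≤ 3 * ‖z - x‖ := by
      rw [rZero, div_le_iff₀ (by positivity)] at hle
      by_contra! hc
      nlinarith
    have hF := abs_greenProfile_sub_le n hs0 hr
    have hpow : rZero x z ^ (s + 1) ≤ rZero x z ^ (3 * s / 2) := by
      exact Real.rpow_le_rpow_of_exponent_ge' hr (by linarith) (by linarith) (by linarith)
    have hrw := rpow_mul_div_sq_rpow hd (mul_nonneg h1 h2) (2 * s - n) (3 * s / 2)
    calc |‖z - x‖ ^ (2 * s - n) * greenProfile n s (rZero x z) -
            ‖z - x‖ ^ (2 * s - n) / s * rZero x z ^ s|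
        = ‖z - x‖ ^ (2 * s - n) * |greenProfile n s (rZero x z) - rZero x z ^ s / s| := by
          rw [← abs_of_nonneg (by positivity : 0 ≤ ‖z - x‖ ^ (2 * s - n)), ← abs_mul,
            abs_of_nonneg (by positivity : 0 ≤ ‖z - x‖ ^ (2 * s - n))]
          ring_nf
      _ ≤ ‖z - x‖ ^ (2 * s - n) * ((n : ℝ) / 2 * rZero x z ^ (3 * s / 2)) := by
          gcongr
          exact hF.trans (by gcongr)
      _ = n / 2 * (((1 - ‖x‖ ^ 2) * (1 - ‖z‖ ^ 2)) ^ (3 * s / 2) *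
            ‖z - x‖ ^ (2 * s - n - 2 * (3 * s / 2))) := by
          rw [← hrw, rZero]; ring
      _ ≤ n / 2 * (((1 - ‖x‖ ^ 2) * (3 * ‖z - x‖)) ^ (3 * s / 2) *
            ‖z - x‖ ^ (2 * s - n - 2 * (3 * s / 2))) := by
          gcongr
      _ = n / 2 * 3 ^ (3 * s / 2) * (1 - ‖x‖ ^ 2) ^ (3 * s / 2) * ‖z - x‖ ^ (s / 2 - n) := by
          rw [Real.mul_rpow h1 (by positivity), Real.mul_rpow (by norm_num) hd.le,
            show s / 2 - n = 3 * s / 2 + (2 * s - n - 2 * (3 * s / 2)) by ring,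
            Real.rpow_add hd]
          ring
      _ ≤ _ := by
          gcongr
          exact le_add_of_nonneg_left (by positivity)
  · rw [indicator_of_notMem (by exact hle), sub_zero, abs_of_nonneg (fracGreen_nonneg n s hx hz)]
    have hq : 1 - ‖z‖ ^ 2 ≤ 11 * (1 - ‖x‖ ^ 2) := by
      rw [rZero, not_le, lt_div_iff₀ (by positivity)] at hle
      by_contra! hc
      nlinarith
    calc fracGreen n s x z
        ≤ 4 / (3 * s) * ((1 - ‖x‖ ^ 2) * (1 - ‖z‖ ^ 2)) ^ (3 * s / 4) *
            ‖z - x‖ ^ (s / 2 - n) := fracGreen_le hn hs hx hz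
      _ ≤ 4 / (3 * s) * ((1 - ‖x‖ ^ 2) * (11 * (1 - ‖x‖ ^ 2))) ^ (3 * s / 4) *
            ‖z - x‖ ^ (s / 2 - n) := by gcongr
      _ = 4 / (3 * s) * 11 ^ (3 * s / 4) * (1 - ‖x‖ ^ 2) ^ (3 * s / 2) *
            ‖z - x‖ ^ (s / 2 - n) := by
          rw [show (1 - ‖x‖ ^ 2) * (11 * (1 - ‖x‖ ^ 2)) = 11 * (1 - ‖x‖ ^ 2) ^ 2 by ring,
            Real.mul_rpow (by norm_num) (by positivity), ← Real.rpow_two,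
            ← Real.rpow_mul h1, show 2 * (3 * s / 4) = 3 * s / 2 by ring]
          ring
      _ ≤ _ := by
          gcongr
          exact le_add_of_nonneg_right (by positivity)

lemma integrableOn_ball_norm_rpow {n : ℕ} (hn : 1 ≤ n) {p : ℝ} (hp : -n < p) (R : ℝ) :
    IntegrableOn (fun z : EuclideanSpace ℝ (Fin n) => ‖z‖ ^ p) (ball 0 R) := by
  refine integrableOn_ball_of_norm_le_rpow (C := 1) (α := -p) (by simpa using hn)
    (by simp only [finrank_euclideanSpace, Fintype.card_fin]; linarith) ?_ ?_
  · refine Eventually.of_forall fun z => ?_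
    rw [Real.norm_of_nonneg (by positivity), neg_neg, one_mul]
  · exact (measurable_norm.pow_const p).aestronglyMeasurable

lemma integrableOn_ball_norm_sub_rpow {n : ℕ} (hn : 1 ≤ n) {p : ℝ} (hp : -n < p)
    (x : EuclideanSpace ℝ (Fin n)) (R : ℝ) :
    IntegrableOn (fun z : EuclideanSpace ℝ (Fin n) => ‖z - x‖ ^ p) (ball x R) := by
  have h := (integrable_indicator_iff measurableSet_ball).2 (integrableOn_ball_norm_rpow hn hp R)
  rw [← integrable_indicator_iff measurableSet_ball]
  refine (h.comp_sub_right x).congr (Eventually.of_forall fun z => ?_)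
  simp only [Set.indicator, mem_ball, dist_eq_norm, sub_zero]

lemma setIntegral_ball_norm_sub_rpow {n : ℕ} (p : ℝ) (x : EuclideanSpace ℝ (Fin n)) (R : ℝ) :
    ∫ z in ball x R, ‖z - x‖ ^ p = ∫ z in ball (0 : EuclideanSpace ℝ (Fin n)) R, ‖z‖ ^ p := by
  rw [← MeasureTheory.integral_indicator measurableSet_ball, ← MeasureTheory.integral_indicator measurableSet_ball,
    ← integral_sub_right_eq_self ((ball 0 R).indicator _) x]
  refine integral_congr_ae (Eventually.of_forall fun z => ?_)
  simp only [Set.indicator, mem_ball, dist_eq_norm, sub_zero]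

lemma measurable_rZero {n : ℕ} (x : EuclideanSpace ℝ (Fin n)) : Measurable (rZero x) := by
  unfold rZero
  fun_prop

lemma aestronglyMeasurable_fracGreen (n : ℕ) {s : ℝ} (hs : 0 < s)
    {x : EuclideanSpace ℝ (Fin n)} (hx : ‖x‖ < 1) :
    AEStronglyMeasurable (fracGreen n s x) (volume.restrict (ball 0 1)) := by
  have h : Measurable fun z : EuclideanSpace ℝ (Fin n) =>
      ‖z - x‖ ^ (2 * s - n) * greenProfile n s (max 0 (rZero x z)) :=
    ((measurable_id.sub_const x).norm.pow_const _).mul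
      ((monotone_greenProfile_max n hs).measurable.comp (measurable_rZero x))
  refine h.aestronglyMeasurable.congr ?_
  filter_upwards [ae_restrict_mem measurableSet_ball] with z hz
  rw [fracGreen_eq, max_eq_right (rZero_nonneg hx (mem_ball_zero_iff.1 hz))]

lemma measurable_fracGreenPrincipal (n : ℕ) (s : ℝ) (x : EuclideanSpace ℝ (Fin n)) :
    Measurable (fracGreenPrincipal n s x) :=
  (((measurable_id.sub_const x).norm.pow_const _).div_const s).mul
    (((measurable_rZero x).min measurable_const).pow_const s)

lemma continuous_of_abs_sub_le_rpow {E : Type*} [SeminormedAddCommGroup E] {f : E → ℝ} {C α : ℝ}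
    (hα : 0 < α) (hf : ∀ x y, |f x - f y| ≤ C * ‖x - y‖ ^ α) : Continuous f := by
  refine continuous_iff_continuousAt.2 fun y => tendsto_iff_dist_tendsto_zero.2 ?_
  have h : Tendsto (fun x => C * ‖x - y‖ ^ α) (nhds y) (nhds 0) := by
    have hc : Continuous fun x => C * ‖x - y‖ ^ α :=
      continuous_const.mul ((continuous_id.sub continuous_const).norm.rpow_const
        fun _ => Or.inr hα.le)
    simpa [Real.zero_rpow hα.ne'] using hc.tendsto y
  exact squeeze_zero (fun _ => dist_nonneg) (fun x => hf x y) h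

/-- Non-asymptotic form of the reduction: the error is of order `(1-|x|²)^{3s/2}`, uniformly in `x`,
for every bounded measurable `f`. -/
lemma abs_integral_fracGreen_sub_le {n : ℕ} (hn : 1 ≤ n) {s : ℝ} (hs : s ∈ Set.Ioo (0 : ℝ) 1)
    {f : EuclideanSpace ℝ (Fin n) → ℝ} (hf : Measurable f) {M : ℝ} (hM : ∀ x, |f x| ≤ M)
    {x : EuclideanSpace ℝ (Fin n)} (hx : ‖x‖ < 1) :
    |(∫ z in ball (0 : EuclideanSpace ℝ (Fin n)) 1, f z * fracGreen n s x z) -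
        ∫ z in {z ∈ ball (0 : EuclideanSpace ℝ (Fin n)) 1 | rZero x z ≤ 1 / 2},
          f z * fracGreenPrincipal n s x z| ≤
      M * (4 / (3 * s) * 11 ^ (3 * s / 4) + n / 2 * 3 ^ (3 * s / 2)) *
        (∫ z in ball (0 : EuclideanSpace ℝ (Fin n)) 2, ‖z‖ ^ (s / 2 - n)) *
        (1 - ‖x‖ ^ 2) ^ (3 * s / 2) := by
  have hs0 := hs.1
  have hM0 : 0 ≤ M := (abs_nonneg _).trans (hM 0)
  have h1 : 0 ≤ 1 - ‖x‖ ^ 2 := by nlinarith [norm_nonneg x]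
  set B : Set (EuclideanSpace ℝ (Fin n)) := ball 0 1
  set A : Set (EuclideanSpace ℝ (Fin n)) := {z | rZero x z ≤ 1 / 2}
  set K : ℝ := 4 / (3 * s) * 11 ^ (3 * s / 4) + n / 2 * 3 ^ (3 * s / 2)
  have hK : 0 ≤ K := by positivity
  have hA : MeasurableSet A := measurable_rZero x measurableSet_Iic
  have hB : MeasurableSet B := measurableSet_ball
  have hsub : B ⊆ ball x 2 := by
    refine ball_subset_ball' ?_
    rw [dist_zero_left]
    linarith
  have hk2 := integrableOn_ball_norm_sub_rpow hn (p := s / 2 - n) (by linarith) x 2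
  have hk := hk2.mono_set hsub
  have hG : IntegrableOn (fracGreen n s x) B := by
    refine (hk.const_mul (4 / (3 * s))).mono' (aestronglyMeasurable_fracGreen n hs0 hx) ?_
    filter_upwards [ae_restrict_mem hB] with z hz
    have hz' : ‖z‖ < 1 := mem_ball_zero_iff.1 hz
    have h2 : 0 ≤ 1 - ‖z‖ ^ 2 := by nlinarith [norm_nonneg z]
    rw [Real.norm_of_nonneg (fracGreen_nonneg n s hx hz')]
    refine (fracGreen_le hn hs hx hz').trans ?_
    gcongr
    refine mul_le_of_le_one_right (by positivity) (Real.rpow_le_one (by positivity) ?_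
      (by positivity))
    exact mul_le_one₀ (by nlinarith [norm_nonneg x]) h2 (by nlinarith [norm_nonneg z])
  have hdiff : ∀ z ∈ B, |fracGreen n s x z - A.indicator (fracGreenPrincipal n s x) z| ≤
      K * (1 - ‖x‖ ^ 2) ^ (3 * s / 2) * ‖z - x‖ ^ (s / 2 - n) := fun z hz =>
    abs_fracGreen_sub_indicator_le hn hs hx (mem_ball_zero_iff.1 hz)
  have hP : IntegrableOn (A.indicator (fracGreenPrincipal n s x)) B := by
    have hmeas := ((measurable_fracGreenPrincipal n s x).indicator hA).aestronglyMeasurable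
      (μ := volume.restrict B)
    have hD : IntegrableOn
        (fun z => fracGreen n s x z - A.indicator (fracGreenPrincipal n s x) z) B := by
      refine (hk.const_mul (K * (1 - ‖x‖ ^ 2) ^ (3 * s / 2))).mono' (hG.1.sub hmeas) ?_
      filter_upwards [ae_restrict_mem hB] with z hz using hdiff z hz
    refine (hG.sub hD).congr (Eventually.of_forall fun z => ?_)
    simp
  have hfm := hf.aestronglyMeasurable (μ := volume.restrict B)
  have hfb : ∀ᵐ z ∂volume.restrict B, ‖f z‖ ≤ M := Eventually.of_forall hM
  have hrestrict : ∫ z in {z ∈ B | rZero x z ≤ 1 / 2}, f z * fracGreenPrincipal n s x z =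
      ∫ z in B, f z * A.indicator (fracGreenPrincipal n s x) z := by
    have hset : {z ∈ B | rZero x z ≤ 1 / 2} = B ∩ A := rfl
    rw [hset, ← setIntegral_indicator hA]
    refine integral_congr_ae (Eventually.of_forall fun z => ?_)
    simp [indicator_apply]
  rw [hrestrict, ← integral_sub (hG.bdd_mul hfm hfb) (hP.bdd_mul hfm hfb)]
  have hbound : ‖∫ z in B, (f z * fracGreen n s x z -
      f z * A.indicator (fracGreenPrincipal n s x) z)‖ ≤
      ∫ z in B, M * (K * (1 - ‖x‖ ^ 2) ^ (3 * s / 2)) * ‖z - x‖ ^ (s / 2 - n) := by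
    refine norm_integral_le_of_norm_le (hk.const_mul _) ?_
    filter_upwards [ae_restrict_mem hB] with z hz
    rw [← mul_sub, norm_mul, mul_assoc]
    exact mul_le_mul (hM z) (hdiff z hz) (norm_nonneg _) hM0
  refine hbound.trans ?_
  rw [MeasureTheory.integral_const_mul, ← setIntegral_ball_norm_sub_rpow (s / 2 - n) x 2]
  have hmono : ∫ z in B, ‖z - x‖ ^ (s / 2 - n) ≤ ∫ z in ball x 2, ‖z - x‖ ^ (s / 2 - n) :=
    setIntegral_mono_set hk2 (Eventually.of_forall fun z => by positivity) hsub.eventuallyLE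
  calc _ ≤ M * (K * (1 - ‖x‖ ^ 2) ^ (3 * s / 2)) * ∫ z in ball x 2, ‖z - x‖ ^ (s / 2 - n) := by
        gcongr
    _ = _ := by ring

/-- Reduction of the fractional Green function to its principal part near the boundary:
`∫_{B₁} f G(e+εω,·) = ∫_{𝒟₂(ε)} f 𝒢₀(e+εω,·) + o(ε^s)` as `ε → 0⁺`, where
`𝒟₂(ε) = {z ∈ B₁ : r₀(e+εω,z) ≤ 1/2}`. -/
theorem green_reduction_to_principal_part
    (n : ℕ) (hn : 1 ≤ n) (s : ℝ) (hs : s ∈ Set.Ioo (0 : ℝ) 1)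
    (α : ℝ) (hα : α ∈ Set.Ioo (0 : ℝ) 1)
    (e ω : EuclideanSpace ℝ (Fin n)) (he : ‖e‖ = 1) (hω : ‖ω‖ = 1)
    (εo : ℝ) (hεo : 0 < εo)
    (hin : ∀ ε ∈ Set.Ioc (0 : ℝ) εo,
      e + ε • ω ∈ Metric.ball (0 : EuclideanSpace ℝ (Fin n)) 1)
    (f : EuclideanSpace ℝ (Fin n) → ℝ)
    (hfH : ∃ C : ℝ, ∀ x y : EuclideanSpace ℝ (Fin n), |f x - f y| ≤ C * ‖x - y‖ ^ α)
    (hfb : ∃ M : ℝ, ∀ x : EuclideanSpace ℝ (Fin n), |f x| ≤ M)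
    (hf0 : ∀ x ∉ Metric.ball (0 : EuclideanSpace ℝ (Fin n)) 1, f x = 0) :
    Tendsto (fun ε : ℝ =>
        ε ^ (-s) *
          ((∫ z in Metric.ball (0 : EuclideanSpace ℝ (Fin n)) 1,
              f z * fracGreen n s (e + ε • ω) z) -
            ∫ z in {z ∈ Metric.ball (0 : EuclideanSpace ℝ (Fin n)) 1 |
                rZero (e + ε • ω) z ≤ 1 / 2},
              f z * fracGreenPrincipal n s (e + ε • ω) z))
      (nhdsWithin 0 (Set.Ioi 0)) (nhds 0) := by
  obtain ⟨C, hC⟩ := hfH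
  obtain ⟨M, hM⟩ := hfb
  have hs0 := hs.1
  have hM0 : 0 ≤ M := (abs_nonneg _).trans (hM 0)
  have hf : Measurable f := (continuous_of_abs_sub_le_rpow hα.1 hC).measurable
  obtain ⟨L, hL0, hL⟩ : ∃ L : ℝ, 0 ≤ L ∧ ∀ x : EuclideanSpace ℝ (Fin n), ‖x‖ < 1 →
      |(∫ z in ball (0 : EuclideanSpace ℝ (Fin n)) 1, f z * fracGreen n s x z) -
        ∫ z in {z ∈ ball (0 : EuclideanSpace ℝ (Fin n)) 1 | rZero x z ≤ 1 / 2},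
          f z * fracGreenPrincipal n s x z| ≤ L * (1 - ‖x‖ ^ 2) ^ (3 * s / 2) :=
    ⟨_, mul_nonneg (mul_nonneg hM0 (by positivity))
        (MeasureTheory.integral_nonneg fun z => by positivity),
      fun _ hx => abs_integral_fracGreen_sub_le hn hs hf hM hx⟩
  have hlim : Tendsto (fun ε : ℝ => L * 2 ^ (3 * s / 2) * ε ^ (s / 2))
      (nhdsWithin 0 (Set.Ioi 0)) (nhds 0) := by
    have hc : Continuous fun ε : ℝ => L * 2 ^ (3 * s / 2) * ε ^ (s / 2) :=
      continuous_const.mul (Real.continuous_rpow_const (by linarith))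
    have h := hc.tendsto 0
    rw [Real.zero_rpow (by linarith : s / 2 ≠ 0), mul_zero] at h
    exact h.mono_left nhdsWithin_le_nhds
  refine squeeze_zero_norm' ?_ hlim
  filter_upwards [Ioc_mem_nhdsGT hεo] with ε hε
  have hε0 : 0 < ε := hε.1
  have hx : ‖e + ε • ω‖ < 1 := mem_ball_zero_iff.1 (hin ε hε)
  have hρ0 : 0 ≤ 1 - ‖e + ε • ω‖ ^ 2 := by nlinarith [norm_nonneg (e + ε • ω)]
  have hρ : 1 - ‖e + ε • ω‖ ^ 2 ≤ 2 * ε := by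
    have h : 1 - ε ≤ ‖e + ε • ω‖ := by
      have h' := norm_sub_norm_le e (-(ε • ω))
      rw [norm_neg, norm_smul, hω, he, sub_neg_eq_add, Real.norm_of_nonneg hε0.le, mul_one] at h'
      exact h'
    nlinarith
  rw [norm_mul, Real.norm_of_nonneg (by positivity)]
  calc _ ≤ ε ^ (-s) * (L * (1 - ‖e + ε • ω‖ ^ 2) ^ (3 * s / 2)) := by
        gcongr
        exact hL _ hx
    _ ≤ ε ^ (-s) * (L * (2 * ε) ^ (3 * s / 2)) := by gcongr
    _ = L * 2 ^ (3 * s / 2) * ε ^ (s / 2) := by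
        rw [Real.mul_rpow (by norm_num) hε0.le, show s / 2 = -s + 3 * s / 2 by ring,
          Real.rpow_add hε0]
        ring
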